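/- The energy gap of the subsystem toric code Hamiltonian is 4(√2−1): the lowest excitation energy above the ground state is 2Δ_s = 4(√2 − 1), achieved by flipping a pair of syndrome bits, while a single gauge excitation costs Δ_g = 4√2; since syndrome bits satisfy ∏_p x_p = ∏_p z_p = 1, a single syndrome flip is impossible, and the gap is min(4√2, 4(√2−1)) = 4(√2−1). -/

import Mathlib

/-- Qubits of the subsystem toric code on the `L × L` torus:
`(0,x,y)` is the vertex at `(x,y)`, `(1,x,y)` is the horizontal edge from `(x,y)` to `(x+1,y)`,
and `(2,x,y)` is the vertical edge from `(x,y)` to `(x,y+1)`. -/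
abbrev Q (L : ℕ) := Fin 3 × ZMod L × ZMod L

/-- Support of the weight-6 X-type stabilizer of plaquette `p` (product of SW and NE triangles). -/
def SXsup (L : ℕ) (p : ZMod L × ZMod L) : Finset (Q L) :=
  {(0, p.1, p.2), (0, p.1 + 1, p.2 + 1), (1, p.1, p.2), (1, p.1, p.2 + 1),
   (2, p.1, p.2), (2, p.1 + 1, p.2)}

/-- Support of the weight-6 Z-type stabilizer of plaquette `p` (product of SE and NW triangles). -/
def SZsup (L : ℕ) (p : ZMod L × ZMod L) : Finset (Q L) :=
  {(0, p.1 + 1, p.2), (0, p.1, p.2 + 1), (1, p.1, p.2), (1, p.1, p.2 + 1),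
   (2, p.1, p.2), (2, p.1 + 1, p.2)}

/-- SW (X-type) triangle of plaquette `p`. -/
def TSW (L : ℕ) (p : ZMod L × ZMod L) : Finset (Q L) :=
  {(0, p.1, p.2), (1, p.1, p.2), (2, p.1, p.2)}

/-- NE (X-type) triangle of plaquette `p`. -/
def TNE (L : ℕ) (p : ZMod L × ZMod L) : Finset (Q L) :=
  {(0, p.1 + 1, p.2 + 1), (1, p.1, p.2 + 1), (2, p.1 + 1, p.2)}

/-- SE (Z-type) triangle of plaquette `p`. -/
def TSE (L : ℕ) (p : ZMod L × ZMod L) : Finset (Q L) :=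
  {(0, p.1 + 1, p.2), (1, p.1, p.2), (2, p.1 + 1, p.2)}

/-- NW (Z-type) triangle of plaquette `p`. -/
def TNW (L : ℕ) (p : ZMod L × ZMod L) : Finset (Q L) :=
  {(0, p.1, p.2 + 1), (1, p.1, p.2 + 1), (2, p.1, p.2)}

/-- The horizontal line `Γ` at height `y₀`: all vertices and horizontal edges with `y = y₀`. -/
def Gam (L : ℕ) [NeZero L] (y₀ : ZMod L) : Finset (Q L) :=
  Finset.univ.filter fun q => (q.1 = 0 ∨ q.1 = 1) ∧ q.2.2 = y₀

/-- The vertical line `Λ` at horizontal position `x₀`: all vertices and vertical edges with `x = x₀`. -/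
def Lam (L : ℕ) [NeZero L] (x₀ : ZMod L) : Finset (Q L) :=
  Finset.univ.filter fun q => (q.1 = 0 ∨ q.1 = 2) ∧ q.2.1 = x₀

/-- `F₂`-indicator vector of a finite set. -/
def ind {α : Type*} [DecidableEq α] (S : Finset α) : α → ZMod 2 :=
  fun i => if i ∈ S then 1 else 0

/-- The Pauli operator `X^a Z^b = ∏ᵢ Xᵢ^{aᵢ} Zᵢ^{bᵢ}` (modulo phase) on qubits indexed by `ι`,
as a matrix in the computational basis: `(X^a Z^b)|y⟩ = (-1)^{b·y} |y+a⟩`. -/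
def pauliOp {ι : Type*} [Fintype ι] [DecidableEq ι] (a b : ι → ZMod 2) :
    Matrix (ι → ZMod 2) (ι → ZMod 2) ℂ :=
  Matrix.of fun x y => if x = y + a then (-1 : ℂ) ^ (∑ i, (b i * y i).val) else 0

/-- The subsystem toric code Hamiltonian `H = −∑_T G(T)`, summing the four triangle
operators of every plaquette, as a matrix on the `2^{3L²}`-dimensional Hilbert space. -/
noncomputable def Ham (L : ℕ) [NeZero L] : Matrix (Q L → ZMod 2) (Q L → ZMod 2) ℂ :=
  -∑ p : ZMod L × ZMod L,
    (pauliOp (ind (TSW L p)) 0 + pauliOp (ind (TNE L p)) 0 +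
     pauliOp 0 (ind (TSE L p)) + pauliOp 0 (ind (TNW L p)))

open Matrix

section PauliAux

variable {ι : Type*} [Fintype ι] [DecidableEq ι]

/-- The sign character of `ZMod 2`. -/
def chi (t : ZMod 2) : ℂ := (-1) ^ t.val

lemma chi_zero : chi 0 = 1 := by simp [chi]
lemma chi_one : chi 1 = -1 := by
  have : (1 : ZMod 2).val = 1 := rfl
  simp [chi, this]
lemma zmod2_cases (t : ZMod 2) : t = 0 ∨ t = 1 := by
  revert t; decide
lemma chi_add (s t : ZMod 2) : chi (s + t) = chi s * chi t := by
  have h : (1 : ZMod 2) + 1 = 0 := rfl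
  rcases zmod2_cases s with rfl | rfl <;> rcases zmod2_cases t with rfl | rfl <;>
    simp [chi_zero, chi_one, h]
lemma chi_sum {α : Type*} (S : Finset α) (f : α → ZMod 2) :
    (-1 : ℂ) ^ (∑ i ∈ S, (f i).val) = chi (∑ i ∈ S, f i) := by
  classical
  induction S using Finset.induction_on with
  | empty => simp [chi_zero]
  | insert a S ha ih => rw [Finset.sum_insert ha, Finset.sum_insert ha, chi_add, pow_add, ih]; rfl

lemma add_self_fun (a : ι → ZMod 2) : a + a = 0 := by
  funext i; exact CharTwo.add_self_eq_zero _

lemma eq_add_iff (x y a : ι → ZMod 2) : x = y + a ↔ y = x + a := by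
  constructor
  · rintro rfl; rw [add_assoc, add_self_fun, add_zero]
  · rintro rfl; rw [add_assoc, add_self_fun, add_zero]

lemma pauliX_mulVec (a : ι → ZMod 2) (v : (ι → ZMod 2) → ℂ) :
    pauliOp a 0 *ᵥ v = fun x => v (x + a) := by
  funext x
  simp [pauliOp, Matrix.mulVec, dotProduct, eq_add_iff x]

lemma pauliZ_mulVec (b : ι → ZMod 2) (v : (ι → ZMod 2) → ℂ) :
    pauliOp 0 b *ᵥ v = fun x => chi (∑ i, b i * x i) * v x := by
  funext x
  simp [pauliOp, Matrix.mulVec, dotProduct, chi_sum]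

lemma mat_ext {n : Type*} [Fintype n] [DecidableEq n] {M N : Matrix n n ℂ}
    (h : ∀ v, M *ᵥ v = N *ᵥ v) : M = N := by
  apply Matrix.toLin'.injective
  ext1 v
  ext1
  simp [h]

lemma pauliX_mul (a b : ι → ZMod 2) : pauliOp a 0 * pauliOp b 0 = pauliOp (a + b) 0 := by
  apply mat_ext; intro v
  rw [← Matrix.mulVec_mulVec]
  simp only [pauliX_mulVec, add_assoc]

lemma pauliZ_mul (a b : ι → ZMod 2) : pauliOp 0 a * pauliOp 0 b = pauliOp 0 (a + b) := by
  apply mat_ext; intro v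
  rw [← Matrix.mulVec_mulVec]
  simp only [pauliZ_mulVec, Pi.add_apply, add_mul, Finset.sum_add_distrib, chi_add, mul_assoc]

lemma pauliX_zero : pauliOp (0 : ι → ZMod 2) 0 = 1 := by
  apply mat_ext; intro v
  simp [pauliX_mulVec]

lemma pauliXZ (a b : ι → ZMod 2) :
    pauliOp a 0 * pauliOp 0 b = chi (∑ i, b i * a i) • (pauliOp 0 b * pauliOp a 0) := by
  apply mat_ext; intro v
  rw [Matrix.smul_mulVec, ← Matrix.mulVec_mulVec, ← Matrix.mulVec_mulVec]
  simp only [pauliX_mulVec, pauliZ_mulVec]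
  funext x
  simp only [Pi.add_apply, mul_add, Finset.sum_add_distrib, chi_add, Pi.smul_apply, smul_eq_mul]
  ring

lemma pauliX_herm (a : ι → ZMod 2) : (pauliOp a 0).IsHermitian := by
  ext x y
  simp [pauliOp, Matrix.conjTranspose_apply, eq_add_iff x]

lemma pauliZ_herm (a : ι → ZMod 2) : (pauliOp 0 a).IsHermitian := by
  ext x y
  by_cases h : x = y
  · subst h; simp [pauliOp, Matrix.conjTranspose_apply]
  · simp [pauliOp, Matrix.conjTranspose_apply, h, Ne.symm h]

end PauliAux

section Joint

variable {n ι : Type*} [Fintype n] [DecidableEq n]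

lemma joint (T : ι → Matrix n n ℂ) (s : ι → ℝ) (hc : ∀ i j, Commute (T i) (T j))
    (W : Submodule ℂ (n → ℂ)) (hW : ∀ i, ∀ v ∈ W, T i *ᵥ v ∈ W)
    (hs : ∀ i, ∀ v ∈ W, T i *ᵥ (T i *ᵥ v) = ((s i ^ 2 : ℝ) : ℂ) • v)
    (hne : ∃ v ∈ W, v ≠ 0) (S : Finset ι) :
    ∃ v ∈ W, v ≠ 0 ∧ ∃ σ : ι → ℝ, (∀ i, σ i = 1 ∨ σ i = -1) ∧
      ∀ i ∈ S, T i *ᵥ v = ((σ i * s i : ℝ) : ℂ) • v := by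
  classical
  induction S using Finset.induction_on with
  | empty =>
    obtain ⟨v, hv, h0⟩ := hne
    exact ⟨v, hv, h0, fun _ => 1, fun _ => Or.inl rfl, by simp⟩
  | insert j S hj ih =>
    obtain ⟨v, hv, h0, σ, hσ, h⟩ := ih
    by_cases hT : T j *ᵥ v = (s j : ℂ) • v
    · refine ⟨v, hv, h0, Function.update σ j 1, ?_, ?_⟩
      · intro i
        by_cases hij : i = j
        · subst hij; simp
        · simp [hij, hσ i]
      · intro i hi
        by_cases hij : i = j
        · subst hij; simpa using hT
        · have := h i (by simpa [hij] using hi)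
          simpa [hij] using this
    · refine ⟨T j *ᵥ v - (s j : ℂ) • v, W.sub_mem (hW _ _ hv) (W.smul_mem _ hv),
        sub_ne_zero.mpr hT, Function.update σ j (-1), ?_, ?_⟩
      · intro i
        by_cases hij : i = j
        · subst hij; simp
        · simp [hij, hσ i]
      · intro i hi
        by_cases hij : i = j
        · subst hij
          rw [Matrix.mulVec_sub, Matrix.mulVec_smul, hs _ _ hv]
          simp only [Function.update_self]
          push_cast
          module
        · have := h i (by simpa [hij] using hi)
          rw [Matrix.mulVec_sub, Matrix.mulVec_smul, Matrix.mulVec_mulVec, (hc i j).eq,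
            ← Matrix.mulVec_mulVec, this, Matrix.mulVec_smul]
          simp only [Function.update_of_ne hij]
          module

lemma flip_signs (T F : ι → Matrix n n ℂ) (s : ι → ℝ)
    (hF : ∀ i, F i * T i = -(T i * F i)) (hFT : ∀ i j, i ≠ j → Commute (F i) (T j))
    (hinj : ∀ i, ∃ G, G * F i = 1)
    (W : Submodule ℂ (n → ℂ)) (hW : ∀ i, ∀ v ∈ W, F i *ᵥ v ∈ W) (τ : ι → ℝ)
    (hτ : ∀ i, τ i = 1 ∨ τ i = -1)
    (hne : ∃ v ∈ W, v ≠ 0 ∧ ∃ σ : ι → ℝ, (∀ i, σ i = 1 ∨ σ i = -1) ∧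
      ∀ i, T i *ᵥ v = ((σ i * s i : ℝ) : ℂ) • v) (S : Finset ι) :
    ∃ v ∈ W, v ≠ 0 ∧ ∃ σ : ι → ℝ, (∀ i, σ i = 1 ∨ σ i = -1) ∧ (∀ i ∈ S, σ i = τ i) ∧
      ∀ i, T i *ᵥ v = ((σ i * s i : ℝ) : ℂ) • v := by
  classical
  induction S using Finset.induction_on with
  | empty =>
    obtain ⟨v, hv, h0, σ, hσ, h⟩ := hne
    exact ⟨v, hv, h0, σ, hσ, by simp, h⟩
  | insert j S hj ih =>
    obtain ⟨v, hv, h0, σ, hσ, hS, h⟩ := ih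
    by_cases hjt : σ j = τ j
    · refine ⟨v, hv, h0, σ, hσ, ?_, h⟩
      intro i hi
      rcases Finset.mem_insert.mp hi with rfl | hi
      · exact hjt
      · exact hS i hi
    · have hneg : τ j = - σ j := by
        rcases hσ j with h1 | h1 <;> rcases hτ j with h2 | h2 <;> simp_all
      refine ⟨F j *ᵥ v, hW _ _ hv, ?_, Function.update σ j (τ j), ?_, ?_, ?_⟩
      · intro h00
        obtain ⟨G, hG⟩ := hinj j
        apply h0
        rw [← Matrix.one_mulVec v, ← hG, ← Matrix.mulVec_mulVec, h00, Matrix.mulVec_zero]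
      · intro i
        by_cases hij : i = j
        · subst hij; simp [hτ i]
        · simp [hij, hσ i]
      · intro i hi
        by_cases hij : i = j
        · subst hij; simp
        · have := hS i (by simpa [hij] using hi)
          simpa [hij] using this
      · intro i
        by_cases hij : i = j
        · subst hij
          have h1 : T i * F i = -(F i * T i) := by rw [hF, neg_neg]
          rw [Matrix.mulVec_mulVec, h1, Matrix.neg_mulVec, ← Matrix.mulVec_mulVec, h i,
            Matrix.mulVec_smul, Function.update_self, hneg]
          push_cast
          module
        · rw [Matrix.mulVec_mulVec, ← (hFT j i (Ne.symm hij)).eq, ← Matrix.mulVec_mulVec, h i,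
            Matrix.mulVec_smul, Function.update_of_ne hij]

end Joint

section Code

variable (L : ℕ) [NeZero L]

/-- SW triangle operator. -/
def gA (p : ZMod L × ZMod L) := pauliOp (ind (TSW L p)) 0
/-- NE triangle operator. -/
def gB (p : ZMod L × ZMod L) := pauliOp (ind (TNE L p)) 0
/-- SE triangle operator. -/
def gC (p : ZMod L × ZMod L) := pauliOp 0 (ind (TSE L p))
/-- NW triangle operator. -/
def gD (p : ZMod L × ZMod L) := pauliOp 0 (ind (TNW L p))

/-- Minus the plaquette Hamiltonian. -/
noncomputable def gK (p : ZMod L × ZMod L) := gA L p + gB L p + gC L p + gD L p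

lemma Ham_eq : Ham L = -∑ p, gK L p := rfl

/-- A triangle described by its three offsets. -/
def tri (f : Fin 3 → ZMod L × ZMod L) (p : ZMod L × ZMod L) : Q L → ZMod 2 :=
  fun q => if q.2 = p + f q.1 then 1 else 0

lemma tSW (p) : ind (TSW L p) = tri L ![(0, 0), (0, 0), (0, 0)] p := by
  funext ⟨k, x, y⟩
  fin_cases k <;> simp [ind, TSW, tri, Prod.ext_iff]
lemma tNE (p) : ind (TNE L p) = tri L ![(1, 1), (0, 1), (1, 0)] p := by
  funext ⟨k, x, y⟩
  fin_cases k <;> simp [ind, TNE, tri, Prod.ext_iff]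
lemma tSE (p) : ind (TSE L p) = tri L ![(1, 0), (0, 0), (1, 0)] p := by
  funext ⟨k, x, y⟩
  fin_cases k <;> simp [ind, TSE, tri, Prod.ext_iff]
lemma tNW (p) : ind (TNW L p) = tri L ![(0, 1), (0, 1), (0, 0)] p := by
  funext ⟨k, x, y⟩
  fin_cases k <;> simp [ind, TNW, tri, Prod.ext_iff]

lemma tri_dot (f g : Fin 3 → ZMod L × ZMod L) (p q : ZMod L × ZMod L) :
    ∑ i, tri L g q i * tri L f p i = ∑ k, if p + f k = q + g k then (1 : ZMod 2) else 0 := by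
  rw [Fintype.sum_prod_type]
  refine Finset.sum_congr rfl fun k _ => ?_
  simp only [tri, mul_ite, mul_one, mul_zero]
  rw [Finset.sum_ite_eq' Finset.univ (p + f k)]
  simp

lemma cancel2 (a b : ZMod 2) : a + b + a = b := by
  rw [add_comm a b, add_assoc, CharTwo.add_self_eq_zero, add_zero]

lemma dotAC (p q) : ∑ i, ind (TSE L q) i * ind (TSW L p) i = if p = q then 1 else 0 := by
  rw [tSW, tSE, tri_dot, Fin.sum_univ_three]
  simp [Prod.ext_iff, cancel2]
lemma dotAD (p q) : ∑ i, ind (TNW L q) i * ind (TSW L p) i = if p = q then 1 else 0 := by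
  rw [tSW, tNW, tri_dot, Fin.sum_univ_three]
  simp [Prod.ext_iff, CharTwo.add_self_eq_zero]
lemma dotBC (p q) : ∑ i, ind (TSE L q) i * ind (TNE L p) i = if p = q then 1 else 0 := by
  rw [tNE, tSE, tri_dot, Fin.sum_univ_three]
  simp [Prod.ext_iff, CharTwo.add_self_eq_zero]
lemma dotBD (p q) : ∑ i, ind (TNW L q) i * ind (TNE L p) i = if p = q then 1 else 0 := by
  rw [tNE, tNW, tri_dot, Fin.sum_univ_three]
  simp [Prod.ext_iff, cancel2]

/-- X-type and Z-type triangle operators commute up to the sign dictated by the plaquettes. -/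
lemma comm_aux {a b : Q L → ZMod 2} {p q : ZMod L × ZMod L}
    (h : ∑ i, b i * a i = if p = q then 1 else 0) (hpq : p ≠ q) :
    Commute (pauliOp a 0) (pauliOp 0 b) := by
  unfold Commute SemiconjBy
  rw [pauliXZ, h, if_neg hpq, chi_zero, one_smul]

lemma anti_aux {a b : Q L → ZMod 2} {p : ZMod L × ZMod L}
    (h : ∑ i, b i * a i = if p = p then 1 else 0) :
    pauliOp 0 b * pauliOp a 0 = -(pauliOp a 0 * pauliOp 0 b) := by
  rw [pauliXZ, h, if_pos rfl, chi_one, neg_smul, one_smul, neg_neg]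

lemma CA (p) : gC L p * gA L p = -(gA L p * gC L p) := anti_aux L (dotAC L p p)
lemma DA (p) : gD L p * gA L p = -(gA L p * gD L p) := anti_aux L (dotAD L p p)
lemma CB (p) : gC L p * gB L p = -(gB L p * gC L p) := anti_aux L (dotBC L p p)
lemma DB (p) : gD L p * gB L p = -(gB L p * gD L p) := anti_aux L (dotBD L p p)

lemma cAC {p q} (h : p ≠ q) : Commute (gA L p) (gC L q) := comm_aux L (dotAC L p q) h
lemma cAD {p q} (h : p ≠ q) : Commute (gA L p) (gD L q) := comm_aux L (dotAD L p q) h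
lemma cBC {p q} (h : p ≠ q) : Commute (gB L p) (gC L q) := comm_aux L (dotBC L p q) h
lemma cBD {p q} (h : p ≠ q) : Commute (gB L p) (gD L q) := comm_aux L (dotBD L p q) h

lemma cXX (a b : Q L → ZMod 2) : Commute (pauliOp a 0) (pauliOp b 0) := by
  unfold Commute SemiconjBy
  rw [pauliX_mul, pauliX_mul, add_comm]
lemma cZZ (a b : Q L → ZMod 2) : Commute (pauliOp 0 a) (pauliOp 0 b) := by
  unfold Commute SemiconjBy
  rw [pauliZ_mul, pauliZ_mul, add_comm]

lemma cAA (p q) : Commute (gA L p) (gA L q) := cXX L _ _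
lemma cAB (p q) : Commute (gA L p) (gB L q) := cXX L _ _
lemma cBB (p q) : Commute (gB L p) (gB L q) := cXX L _ _
lemma cCC (p q) : Commute (gC L p) (gC L q) := cZZ L _ _
lemma cCD (p q) : Commute (gC L p) (gD L q) := cZZ L _ _
lemma cDD (p q) : Commute (gD L p) (gD L q) := cZZ L _ _

lemma sqX (a : Q L → ZMod 2) : pauliOp a 0 * pauliOp a 0 = 1 := by
  rw [pauliX_mul, add_self_fun, pauliX_zero]
lemma sqZ (a : Q L → ZMod 2) : pauliOp 0 a * pauliOp 0 a = 1 := by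
  rw [pauliZ_mul, add_self_fun, pauliX_zero]

lemma AA (p) : gA L p * gA L p = 1 := sqX L _
lemma BB (p) : gB L p * gB L p = 1 := sqX L _
lemma CC (p) : gC L p * gC L p = 1 := sqZ L _
lemma DD (p) : gD L p * gD L p = 1 := sqZ L _

/-- X stabilizer. -/
def gX (p : ZMod L × ZMod L) := pauliOp (ind (TSW L p) + ind (TNE L p)) 0
/-- Z stabilizer. -/
def gZ (p : ZMod L × ZMod L) := pauliOp 0 (ind (TSE L p) + ind (TNW L p))

lemma gX_eq (p) : gX L p = gA L p * gB L p := (pauliX_mul _ _).symm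
lemma gZ_eq (p) : gZ L p = gC L p * gD L p := (pauliZ_mul _ _).symm

lemma gK_sq (p) : gK L p * gK L p = (4 : ℂ) • 1 + (2 : ℂ) • gX L p + (2 : ℂ) • gZ L p := by
  rw [gX_eq, gZ_eq, gK]
  simp only [mul_add, add_mul, AA, BB, CC, DD, CA, DA, CB, DB, (cAB L p p).eq.symm,
    (cCD L p p).eq.symm]
  module

lemma cKK (p q) : Commute (gK L p) (gK L q) := by
  by_cases h : p = q
  · subst h; exact Commute.refl _
  have h' := Ne.symm h
  refine Commute.add_left (Commute.add_left (Commute.add_left ?_ ?_) ?_) ?_ <;>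
    refine Commute.add_right (Commute.add_right (Commute.add_right ?_ ?_) ?_) ?_
  · exact cAA L _ _
  · exact cAB L _ _
  · exact cAC L h
  · exact cAD L h
  · exact (cAB L _ _).symm
  · exact cBB L _ _
  · exact cBC L h
  · exact cBD L h
  · exact (cAC L h').symm
  · exact (cBC L h').symm
  · exact cCC L _ _
  · exact cCD L _ _
  · exact (cAD L h').symm
  · exact (cBD L h').symm
  · exact (cCD L _ _).symm
  · exact cDD L _ _

lemma comm_of_dot {a b : Q L → ZMod 2} (h : ∑ i, b i * a i = 0) :
    Commute (pauliOp a 0) (pauliOp 0 b) := by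
  unfold Commute SemiconjBy
  rw [pauliXZ, h, chi_zero, one_smul]

lemma dotXC (p q) : ∑ i, ind (TSE L q) i * (ind (TSW L p) + ind (TNE L p)) i = 0 := by
  simp only [Pi.add_apply, mul_add, Finset.sum_add_distrib, dotAC, dotBC]
  exact CharTwo.add_self_eq_zero _
lemma dotXD (p q) : ∑ i, ind (TNW L q) i * (ind (TSW L p) + ind (TNE L p)) i = 0 := by
  simp only [Pi.add_apply, mul_add, Finset.sum_add_distrib, dotAD, dotBD]
  exact CharTwo.add_self_eq_zero _
lemma dotAZ (p q) : ∑ i, (ind (TSE L q) + ind (TNW L q)) i * ind (TSW L p) i = 0 := by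
  simp only [Pi.add_apply, add_mul, Finset.sum_add_distrib, dotAC, dotAD]
  exact CharTwo.add_self_eq_zero _
lemma dotBZ (p q) : ∑ i, (ind (TSE L q) + ind (TNW L q)) i * ind (TNE L p) i = 0 := by
  simp only [Pi.add_apply, add_mul, Finset.sum_add_distrib, dotBC, dotBD]
  exact CharTwo.add_self_eq_zero _
lemma dotXZ (p q) :
    ∑ i, (ind (TSE L q) + ind (TNW L q)) i * (ind (TSW L p) + ind (TNE L p)) i = 0 := by
  have h1 := dotAZ L p q
  have h2 := dotBZ L p q
  simp only [Pi.add_apply (ind (TSW L p)), mul_add, Finset.sum_add_distrib, h1, h2, add_zero]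

lemma cXA (p q) : Commute (gX L p) (gA L q) := cXX L _ _
lemma cXB (p q) : Commute (gX L p) (gB L q) := cXX L _ _
lemma cXC (p q) : Commute (gX L p) (gC L q) := comm_of_dot L (dotXC L p q)
lemma cXD (p q) : Commute (gX L p) (gD L q) := comm_of_dot L (dotXD L p q)
lemma cZA (p q) : Commute (gZ L p) (gA L q) := (comm_of_dot L (dotAZ L q p)).symm
lemma cZB (p q) : Commute (gZ L p) (gB L q) := (comm_of_dot L (dotBZ L q p)).symm
lemma cZC (p q) : Commute (gZ L p) (gC L q) := cZZ L _ _
lemma cZD (p q) : Commute (gZ L p) (gD L q) := cZZ L _ _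
lemma cstabXZ (p q) : Commute (gX L p) (gZ L q) := comm_of_dot L (dotXZ L p q)
lemma cXK (p q) : Commute (gX L p) (gK L q) :=
  (((cXA L p q).add_right (cXB L p q)).add_right (cXC L p q)).add_right (cXD L p q)
lemma cZK (p q) : Commute (gZ L p) (gK L q) :=
  (((cZA L p q).add_right (cZB L p q)).add_right (cZC L p q)).add_right (cZD L p q)

/-- The operator exciting one gauge qubit. -/
noncomputable def gF (p : ZMod L × ZMod L) := gA L p * gC L p

lemma gF_anti (p) : gF L p * gK L p = -(gK L p * gF L p) := by
  have e1 : gA L p * gC L p * gA L p = -(gA L p * (gA L p * gC L p)) := by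
    rw [mul_assoc, CA, mul_neg]
  have e2 : gA L p * gC L p * gB L p = -(gB L p * (gA L p * gC L p)) := by
    rw [mul_assoc, CB, mul_neg, ← mul_assoc, ← mul_assoc, (cAB L p p).eq]
  have e3 : gA L p * gC L p * gC L p = -(gC L p * (gA L p * gC L p)) := by
    rw [← mul_assoc, CA, neg_mul, neg_neg]
  have e4 : gA L p * gC L p * gD L p = -(gD L p * (gA L p * gC L p)) := by
    rw [← mul_assoc, DA, neg_mul, neg_neg, mul_assoc, mul_assoc, (cCD L p p).eq]
  simp only [gF, gK, mul_add, add_mul, e1, e2, e3, e4]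
  abel

lemma gF_comm (p q) (h : p ≠ q) : Commute (gF L p) (gK L q) := by
  have h' := Ne.symm h
  refine Commute.mul_left ?_ ?_
  · exact (((cAA L p q).add_right (cAB L p q)).add_right (cAC L h)).add_right (cAD L h)
  · exact (((cAC L h').symm.add_right (cBC L h').symm).add_right (cCC L p q)).add_right
      (cCD L p q)

lemma gF_inv (p) : ∃ G, G * gF L p = 1 := by
  refine ⟨gC L p * gA L p, ?_⟩
  rw [gF, mul_assoc, ← mul_assoc (gA L p), AA, one_mul, CC]

lemma cXF (p q) : Commute (gX L p) (gF L q) := (cXA L p q).mul_right (cXC L p q)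
lemma cZF (p q) : Commute (gZ L p) (gF L q) := (cZA L p q).mul_right (cZC L p q)

lemma Ham_herm : (Ham L).IsHermitian := by
  unfold Matrix.IsHermitian
  rw [Ham_eq, Matrix.conjTranspose_neg, Matrix.conjTranspose_sum]
  congr 1
  refine Finset.sum_congr rfl fun p _ => ?_
  simp only [gK, gA, gB, gC, gD, Matrix.conjTranspose_add, (pauliX_herm _).eq, (pauliZ_herm _).eq]

lemma sum_tri (f : Fin 3 → ZMod L × ZMod L) : ∑ p, tri L f p = fun _ => 1 := by
  funext q
  rw [Finset.sum_apply]
  have : ∀ p, tri L f p q = if p = q.2 - f q.1 then 1 else 0 := by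
    intro p
    simp only [tri, eq_sub_iff_add_eq, eq_comm]
  simp [this]

lemma sum_X : ∑ p, (ind (TSW L p) + ind (TNE L p)) = 0 := by
  simp only [tSW, tNE, Finset.sum_add_distrib, sum_tri]
  exact add_self_fun _
lemma sum_Z : ∑ p, (ind (TSE L p) + ind (TNW L p)) = 0 := by
  simp only [tSE, tNW, Finset.sum_add_distrib, sum_tri]
  exact add_self_fun _

lemma prod_X {v : (Q L → ZMod 2) → ℂ} (h0 : v ≠ 0) (e : ZMod L × ZMod L → ℝ)
    (h : ∀ p, gX L p *ᵥ v = (e p : ℂ) • v) : ∏ p, e p = 1 := by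
  have key : ∀ S : Finset (ZMod L × ZMod L),
      pauliOp (∑ p ∈ S, (ind (TSW L p) + ind (TNE L p))) 0 *ᵥ v = ((∏ p ∈ S, e p : ℝ) : ℂ) • v := by
    intro S
    induction S using Finset.induction_on with
    | empty => simp [pauliX_zero]
    | insert a S ha ih =>
      rw [Finset.sum_insert ha, Finset.prod_insert ha, ← pauliX_mul, ← Matrix.mulVec_mulVec, ih,
        Matrix.mulVec_smul]
      have := h a
      rw [gX] at this
      rw [this]
      push_cast
      module
  have h1 := key Finset.univ
  rw [sum_X, pauliX_zero, Matrix.one_mulVec] at h1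
  have h2 : (((∏ p, e p : ℝ) : ℂ) - 1) • v = 0 := by rw [sub_smul, ← h1, one_smul, sub_self]
  rcases smul_eq_zero.mp h2 with h3 | h3
  · exact_mod_cast sub_eq_zero.mp h3
  · exact absurd h3 h0

lemma prod_Z {v : (Q L → ZMod 2) → ℂ} (h0 : v ≠ 0) (e : ZMod L × ZMod L → ℝ)
    (h : ∀ p, gZ L p *ᵥ v = (e p : ℂ) • v) : ∏ p, e p = 1 := by
  have key : ∀ S : Finset (ZMod L × ZMod L),
      pauliOp 0 (∑ p ∈ S, (ind (TSE L p) + ind (TNW L p))) *ᵥ v = ((∏ p ∈ S, e p : ℝ) : ℂ) • v := by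
    intro S
    induction S using Finset.induction_on with
    | empty => simp [pauliX_zero]
    | insert a S ha ih =>
      rw [Finset.sum_insert ha, Finset.prod_insert ha, ← pauliZ_mul, ← Matrix.mulVec_mulVec, ih,
        Matrix.mulVec_smul]
      have := h a
      rw [gZ] at this
      rw [this]
      push_cast
      module
  have h1 := key Finset.univ
  rw [sum_Z, pauliX_zero, Matrix.one_mulVec] at h1
  have h2 : (((∏ p, e p : ℝ) : ℂ) - 1) • v = 0 := by rw [sub_smul, ← h1, one_smul, sub_self]
  rcases smul_eq_zero.mp h2 with h3 | h3
  · exact_mod_cast sub_eq_zero.mp h3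
  · exact absurd h3 h0

/-- Common eigenspace of the stabilizers. -/
def syn (e d : ZMod L × ZMod L → ℝ) : Submodule ℂ ((Q L → ZMod 2) → ℂ) where
  carrier := {v | ∀ p, gX L p *ᵥ v = (e p : ℂ) • v ∧ gZ L p *ᵥ v = (d p : ℂ) • v}
  zero_mem' := by intro p; simp
  add_mem' := by
    intro u v hu hv p
    simp only [Matrix.mulVec_add, (hu p).1, (hu p).2, (hv p).1, (hv p).2, smul_add, and_self]
  smul_mem' := by
    intro c v hv p
    simp only [Matrix.mulVec_smul, (hv p).1, (hv p).2, smul_comm c, and_self]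

lemma syn_inv {e d : ZMod L × ZMod L → ℝ} {M : Matrix (Q L → ZMod 2) (Q L → ZMod 2) ℂ}
    (hX : ∀ p, Commute (gX L p) M) (hZ : ∀ p, Commute (gZ L p) M) :
    ∀ v ∈ syn L e d, M *ᵥ v ∈ syn L e d := by
  intro v hv p
  rw [Matrix.mulVec_mulVec, Matrix.mulVec_mulVec, (hX p).eq, (hZ p).eq, ← Matrix.mulVec_mulVec,
    ← Matrix.mulVec_mulVec, (hv p).1, (hv p).2, Matrix.mulVec_smul, Matrix.mulVec_smul]
  exact ⟨rfl, rfl⟩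

lemma syn_sq {e d s : ZMod L × ZMod L → ℝ} (hs : ∀ p, s p ^ 2 = 4 + 2 * e p + 2 * d p) (p) :
    ∀ v ∈ syn L e d, gK L p *ᵥ (gK L p *ᵥ v) = ((s p ^ 2 : ℝ) : ℂ) • v := by
  intro v hv
  rw [Matrix.mulVec_mulVec, gK_sq, hs, Matrix.add_mulVec, Matrix.add_mulVec, Matrix.smul_mulVec,
    Matrix.smul_mulVec, Matrix.smul_mulVec, (hv p).1, (hv p).2, Matrix.one_mulVec]
  push_cast
  module

lemma Ham_apply {v : (Q L → ZMod 2) → ℂ} {t : ZMod L × ZMod L → ℝ}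
    (h : ∀ p, gK L p *ᵥ v = (t p : ℂ) • v) : Ham L *ᵥ v = ((-∑ p, t p : ℝ) : ℂ) • v := by
  rw [Ham_eq, Matrix.neg_mulVec, Matrix.sum_mulVec]
  simp only [h, ← Finset.sum_smul]
  push_cast
  rw [neg_smul]

/-- Existence of states with prescribed Z syndrome and gauge signs. -/
lemma exists_state (y₀ : Q L → ZMod 2) (d s τ : ZMod L × ZMod L → ℝ)
    (hd : ∀ p, (d p : ℂ) = chi (∑ i, (ind (TSE L p) + ind (TNW L p)) i * y₀ i))
    (hs : ∀ p, s p ^ 2 = 6 + 2 * d p) (hτ : ∀ p, τ p = 1 ∨ τ p = -1) :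
    ∃ v, v ≠ 0 ∧ Ham L *ᵥ v = ((-∑ p, τ p * s p : ℝ) : ℂ) • v := by
  classical
  have hne : ∃ v ∈ syn L (fun _ => 1) d, v ≠ 0 := by
    refine ⟨fun y => if ∀ p, ∑ i, (ind (TSE L p) + ind (TNW L p)) i * y i =
      ∑ i, (ind (TSE L p) + ind (TNW L p)) i * y₀ i then 1 else 0, ?_, ?_⟩
    · intro p
      constructor
      · rw [gX, pauliX_mulVec]
        funext y
        have : ∀ q, ∑ i, (ind (TSE L q) + ind (TNW L q)) i *
            (y + (ind (TSW L p) + ind (TNE L p))) i =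
            ∑ i, (ind (TSE L q) + ind (TNW L q)) i * y i := by
          intro q
          have h := dotXZ L p q
          simp only [Pi.add_apply y, mul_add, Finset.sum_add_distrib, h, add_zero]
        simp only [this]
        simp
      · rw [gZ, pauliZ_mulVec]
        funext y
        simp only [Pi.smul_apply, smul_eq_mul, hd]
        split_ifs with h
        · rw [h p]
        · simp
    · intro h
      have := congrFun h y₀
      simp at this
  have hs' : ∀ p, s p ^ 2 = 4 + 2 * (1 : ℝ) + 2 * d p := by intro p; rw [hs]; ring
  obtain ⟨v, hv, h0, σ, hσ, h⟩ := joint (gK L) s (cKK L) (syn L (fun _ => 1) d)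
    (fun i => syn_inv L (fun p => cXK L p i) (fun p => cZK L p i))
    (syn_sq L hs') hne Finset.univ
  obtain ⟨w, hw, hw0, σ', hσ', h1, h2⟩ := flip_signs (gK L) (gF L) s (gF_anti L) (gF_comm L)
    (gF_inv L) (syn L (fun _ => 1) d)
    (fun i => syn_inv L (fun p => cXF L p i) (fun p => cZF L p i)) τ hτ
    ⟨v, hv, h0, σ, hσ, fun i => h i (Finset.mem_univ _)⟩ Finset.univ
  refine ⟨w, hw0, Ham_apply L (t := fun p => τ p * s p) fun p => ?_⟩
  rw [h2 p, h1 p (Finset.mem_univ _)]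

lemma exists_index (hH : (Ham L).IsHermitian) {v : (Q L → ZMod 2) → ℂ} (h0 : v ≠ 0) {r : ℝ}
    (h : Ham L *ᵥ v = (r : ℂ) • v) : ∃ i, hH.eigenvalues i = r := by
  have : r ∈ Set.range hH.eigenvalues := by
    rw [← hH.spectrum_real_eq_range_eigenvalues]
    rw [← spectrum.algebraMap_mem_iff ℂ, ← Matrix.spectrum_toLin',
      ← Module.End.hasEigenvalue_iff_mem_spectrum]
    refine Module.End.hasEigenvalue_of_hasEigenvector (x := v) ⟨?_, h0⟩
    rw [Module.End.mem_eigenspace_iff]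
    simpa using h
  exact this

/-- Any eigenvalue is a sum of plaquette energies compatible with the parity constraints. -/
lemma eig_struct {v : (Q L → ZMod 2) → ℂ} (h0 : v ≠ 0) {r : ℝ}
    (h : Ham L *ᵥ v = (r : ℂ) • v) :
    ∃ e d σ : ZMod L × ZMod L → ℝ, (∀ p, e p = 1 ∨ e p = -1) ∧ (∀ p, d p = 1 ∨ d p = -1) ∧
      (∀ p, σ p = 1 ∨ σ p = -1) ∧ ∏ p, e p = 1 ∧ ∏ p, d p = 1 ∧
      r = -∑ p, σ p * Real.sqrt (4 + 2 * e p + 2 * d p) := by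
  classical
  let E : Submodule ℂ ((Q L → ZMod 2) → ℂ) :=
    Module.End.eigenspace (Matrix.toLin' (Ham L)) (r : ℂ)
  have hE : ∀ v, v ∈ E ↔ Ham L *ᵥ v = (r : ℂ) • v := by
    intro v
    simp [E, Module.End.mem_eigenspace_iff]
  have hEinv : ∀ M, Commute M (Ham L) → ∀ v ∈ E, M *ᵥ v ∈ E := by
    intro M hM v hv
    rw [hE] at hv ⊢
    rw [Matrix.mulVec_mulVec, ← hM.eq, ← Matrix.mulVec_mulVec, hv, Matrix.mulVec_smul]
  have cXH : ∀ p, Commute (gX L p) (Ham L) := fun p =>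
    (Commute.sum_right _ _ _ fun q _ => cXK L p q).neg_right
  have cZH : ∀ p, Commute (gZ L p) (Ham L) := fun p =>
    (Commute.sum_right _ _ _ fun q _ => cZK L p q).neg_right
  have cKH : ∀ p, Commute (gK L p) (Ham L) := fun p =>
    (Commute.sum_right _ _ _ fun q _ => cKK L p q).neg_right
  obtain ⟨u, hu, hu0, ε, hε, h1⟩ := joint (Sum.elim (gX L) (gZ L)) (fun _ => 1)
    (by
      rintro (p | p) (q | q)
      · exact cXX L _ _
      · exact cstabXZ L _ _
      · exact (cstabXZ L _ _).symm
      · exact cZZ L _ _) E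
    (by
      rintro (p | p)
      · exact hEinv _ (cXH p)
      · exact hEinv _ (cZH p))
    (by
      rintro (p | p) v -
      · simp [Matrix.mulVec_mulVec, gX, sqX]
      · simp [Matrix.mulVec_mulVec, gZ, sqZ]) ⟨v, (hE v).mpr h, h0⟩ Finset.univ
  let e : ZMod L × ZMod L → ℝ := fun p => ε (Sum.inl p)
  let d : ZMod L × ZMod L → ℝ := fun p => ε (Sum.inr p)
  have he : ∀ p, e p = 1 ∨ e p = -1 := fun p => hε _
  have hd : ∀ p, d p = 1 ∨ d p = -1 := fun p => hε _
  have huX : ∀ p, gX L p *ᵥ u = (e p : ℂ) • u := fun p => by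
    simpa using h1 (Sum.inl p) (Finset.mem_univ _)
  have huZ : ∀ p, gZ L p *ᵥ u = (d p : ℂ) • u := fun p => by
    simpa using h1 (Sum.inr p) (Finset.mem_univ _)
  have hs : ∀ p, Real.sqrt (4 + 2 * e p + 2 * d p) ^ 2 = 4 + 2 * e p + 2 * d p := by
    intro p
    apply Real.sq_sqrt
    rcases he p with h | h <;> rcases hd p with h' | h' <;> rw [h, h'] <;> norm_num
  obtain ⟨w, hw, hw0, σ, hσ, h2⟩ := joint (gK L) (fun p => Real.sqrt (4 + 2 * e p + 2 * d p))
    (cKK L) (E ⊓ syn L e d)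
    (fun i v hv => ⟨hEinv _ (cKH i) v hv.1,
      syn_inv L (fun p => cXK L p i) (fun p => cZK L p i) v hv.2⟩)
    (fun i v hv => syn_sq L (s := fun p => Real.sqrt (4 + 2 * e p + 2 * d p)) hs i v hv.2)
    ⟨u, ⟨hu, fun p => ⟨huX p, huZ p⟩⟩, hu0⟩ Finset.univ
  refine ⟨e, d, σ, he, hd, hσ, prod_X L hu0 e huX, prod_Z L hu0 d huZ, ?_⟩
  have h3 := Ham_apply L (t := fun p => σ p * Real.sqrt (4 + 2 * e p + 2 * d p))
    (fun p => h2 p (Finset.mem_univ _))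
  rw [(hE w).mp hw.1] at h3
  have h4 := smul_left_injective ℂ hw0 h3
  exact_mod_cast h4

lemma comb {P : Type*} [Fintype P] (e d σ : P → ℝ) (he : ∀ p, e p = 1 ∨ e p = -1)
    (hd : ∀ p, d p = 1 ∨ d p = -1) (hσ : ∀ p, σ p = 1 ∨ σ p = -1)
    (hpe : ∏ p, e p = 1) (hpd : ∏ p, d p = 1) :
    ∑ p, (2 * Real.sqrt 2 - σ p * Real.sqrt (4 + 2 * e p + 2 * d p)) = 0 ∨
    4 * (Real.sqrt 2 - 1) ≤ ∑ p, (2 * Real.sqrt 2 - σ p * Real.sqrt (4 + 2 * e p + 2 * d p)) := by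
  classical
  have h8 : Real.sqrt 8 = 2 * Real.sqrt 2 := by
    rw [show (8 : ℝ) = 2 ^ 2 * 2 by norm_num, Real.sqrt_mul (by norm_num),
      Real.sqrt_sq (by norm_num)]
  have h4 : Real.sqrt 4 = 2 := by
    rw [show (4 : ℝ) = 2 ^ 2 by norm_num, Real.sqrt_sq (by norm_num)]
  have h1 : 1 < Real.sqrt 2 := by
    rw [Real.lt_sqrt] <;> norm_num
  set f : P → ℝ := fun p => 2 * Real.sqrt 2 - σ p * Real.sqrt (4 + 2 * e p + 2 * d p) with hf
  have hcase : ∀ p, (f p = 0 ∧ e p = 1 ∧ d p = 1) ∨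
      (e p = 1 ∧ d p = 1 ∧ f p = 4 * Real.sqrt 2) ∨ 2 * (Real.sqrt 2 - 1) ≤ f p := by
    intro p
    simp only [hf]
    rcases he p with h | h <;> rcases hd p with h' | h' <;> rcases hσ p with h'' | h'' <;>
      rw [h, h', h'']
    · left; norm_num [h8]
    · right; left; norm_num [h8]; ring
    all_goals
      right; right; norm_num [h4]; try linarith
  have hnn : ∀ p, 0 ≤ f p := by
    intro p
    rcases hcase p with h | h | h
    · exact h.1.ge
    · rw [h.2.2]; positivity
    · linarith
  by_cases hall : ∀ p, f p = 0
  · left; exact Finset.sum_eq_zero fun p _ => hall p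
  right
  push Not at hall
  obtain ⟨p, hp⟩ := hall
  have hge : ∀ q, f q ≠ 0 → 2 * (Real.sqrt 2 - 1) ≤ f q := by
    intro q hq
    rcases hcase q with h | h | h
    · exact absurd h.1 hq
    · rw [h.2.2]; linarith
    · exact h
  by_cases hex : ∃ q, q ≠ p ∧ f q ≠ 0
  · obtain ⟨q, hqp, hq⟩ := hex
    have hsub : ∑ x ∈ {q, p}, f x ≤ ∑ x, f x :=
      Finset.sum_le_sum_of_subset_of_nonneg (Finset.subset_univ _) fun x _ _ => hnn x
    rw [Finset.sum_pair hqp] at hsub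
    linarith [hge p hp, hge q hq]
  · push Not at hex
    have hone : ∀ q, q ≠ p → e q = 1 ∧ d q = 1 := by
      intro q hq
      rcases hcase q with h | h | h
      · exact h.2
      · exact ⟨h.1, h.2.1⟩
      · rw [hex q hq] at h; linarith
    rw [Fintype.prod_eq_single p fun q hq => (hone q hq).1] at hpe
    rw [Fintype.prod_eq_single p fun q hq => (hone q hq).2] at hpd
    rw [Fintype.sum_eq_single p hex]
    have h4p : f p = 4 * Real.sqrt 2 := by
      have hs : f p = 2 * Real.sqrt 2 - σ p * (2 * Real.sqrt 2) := by
        simp only [hf, hpe, hpd]; norm_num [h8]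
      rcases hσ p with h | h
      · exact absurd (by rw [hs, h]; ring) hp
      · rw [hs, h]; ring
    linarith

end Code

/-- the energy gap of the subsystem toric code Hamiltonian is
`2Δ_s = 4(√2 − 1)`, attained by flipping a pair of syndrome bits: every eigenvalue is either
the ground energy `E₀ = −2√2 L²` or at least `E₀ + 4(√2−1)`, and `E₀ + 4(√2−1)` is attained;
a single gauge excitation costs `Δ_g = 4√2`, and `E₀ + 4√2` is also an eigenvalue; the gap is
`min(4√2, 4(√2−1)) = 4(√2−1)`. -/
theorem spectral_gap (L : ℕ) [NeZero L] (hL : 2 ≤ L) :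
    ∃ hH : (Ham L).IsHermitian,
      (∀ i, hH.eigenvalues i = -(2 * Real.sqrt 2 * (L : ℝ) ^ 2) ∨
        -(2 * Real.sqrt 2 * (L : ℝ) ^ 2) + 4 * (Real.sqrt 2 - 1) ≤ hH.eigenvalues i) ∧
      (∃ i, hH.eigenvalues i =
        -(2 * Real.sqrt 2 * (L : ℝ) ^ 2) + 4 * (Real.sqrt 2 - 1)) ∧
      (∃ i, hH.eigenvalues i = -(2 * Real.sqrt 2 * (L : ℝ) ^ 2) + 4 * Real.sqrt 2) ∧
      min (4 * Real.sqrt 2) (4 * (Real.sqrt 2 - 1)) = 4 * (Real.sqrt 2 - 1) := by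
  classical
  have h2 : Real.sqrt 2 ^ 2 = 2 := Real.sq_sqrt (by norm_num)
  have hcard : (Fintype.card (ZMod L × ZMod L) : ℝ) = (L : ℝ) ^ 2 := by
    rw [Fintype.card_prod, ZMod.card]; push_cast; ring
  refine ⟨Ham_herm L, ?_, ?_, ?_, ?_⟩
  · intro i
    have hv := (Ham_herm L).mulVec_eigenvectorBasis i
    have hne : (((Ham_herm L).eigenvectorBasis i).ofLp : (Q L → ZMod 2) → ℂ) ≠ 0 := by
      intro h
      apply (Ham_herm L).eigenvectorBasis.toBasis.ne_zero i
      ext1 j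
      simpa using congrFun h j
    obtain ⟨e, d, σ, he, hd, hσ, hpe, hpd, hr⟩ := eig_struct L hne
      (r := (Ham_herm L).eigenvalues i) (by rw [hv]; rfl)
    have hc := comb e d σ he hd hσ hpe hpd
    rw [Finset.sum_sub_distrib, Finset.sum_const, Finset.card_univ, nsmul_eq_mul, hcard] at hc
    rw [hr]
    rcases hc with hc | hc
    · left; linarith
    · right; linarith
  · have hL1 : (1 : ZMod L) ≠ 0 := by
      haveI : Fact (1 < L) := ⟨hL⟩
      exact one_ne_zero
    have hab : ((0, 0) : ZMod L × ZMod L) ≠ (0, -1) := by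
      intro h
      apply hL1
      have := congrArg Prod.snd h
      simpa using this.symm
    obtain ⟨v, hv0, hv⟩ := exists_state L (Pi.single ((1, 0, 0) : Q L) 1)
      (fun p => if p = (0, 0) ∨ p = (0, -1) then -1 else 1)
      (fun p => 2 * Real.sqrt 2 - (if p = (0, 0) then (2 * Real.sqrt 2 - 2) else 0)
        - (if p = (0, -1) then (2 * Real.sqrt 2 - 2) else 0)) (fun _ => 1)
      (by
        intro p
        have hsum : ∑ i, (ind (TSE L p) + ind (TNW L p)) i *
            (Pi.single ((1, 0, 0) : Q L) 1 : Q L → ZMod 2) i =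
            (if p = (0, 0) then 1 else 0) + (if p = (0, -1) then 1 else 0) := by
          rw [Fintype.sum_eq_single ((1, 0, 0) : Q L)]
          · obtain ⟨a, b⟩ := p
            rw [tSE, tNW]
            simp [tri, Prod.ext_iff, eq_comm, eq_neg_iff_add_eq_zero]
          · intro q hq
            simp [Pi.single_eq_of_ne hq]
        rw [hsum]
        by_cases h1 : p = (0, 0)
        · subst h1
          simp [chi_one, hL1]
        · by_cases h3 : p = (0, -1)
          · subst h3
            simp [chi_one, hL1]
          · simp only [h1, h3, if_false, or_self, add_zero, chi_zero]
            simp)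
      (by
        intro p
        by_cases h1 : p = (0, 0)
        · subst h1
          simp only [hab, if_true, if_false, true_or]; norm_num
        · by_cases h3 : p = (0, -1)
          · subst h3
            simp only [hab.symm, if_true, if_false, or_true]; norm_num
          · simp only [h1, h3, if_false, or_self]
            linear_combination 4 * h2) (fun _ => Or.inl rfl)
    obtain ⟨i, hi⟩ := exists_index L (Ham_herm L) hv0 hv
    refine ⟨i, hi.trans ?_⟩
    simp only [one_mul, Finset.sum_sub_distrib, Finset.sum_const, Finset.card_univ, nsmul_eq_mul,
      hcard, Finset.sum_ite_eq', Finset.mem_univ, if_true]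
    ring
  · obtain ⟨v, hv0, hv⟩ := exists_state L 0 (fun _ => 1) (fun _ => 2 * Real.sqrt 2)
      (fun p => if p = 0 then -1 else 1) (by intro p; simp [chi_zero])
      (by intro p; linear_combination 4 * h2)
      (by intro p; by_cases h : p = 0 <;> simp [h])
    obtain ⟨i, hi⟩ := exists_index L (Ham_herm L) hv0 hv
    refine ⟨i, hi.trans ?_⟩
    have : ∀ p : ZMod L × ZMod L, (if p = 0 then (-1 : ℝ) else 1) * (2 * Real.sqrt 2) =
        2 * Real.sqrt 2 - if p = 0 then 4 * Real.sqrt 2 else 0 := by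
      intro p; split_ifs <;> ring
    simp only [this, Finset.sum_sub_distrib, Finset.sum_const, Finset.card_univ, nsmul_eq_mul,
      hcard, Finset.sum_ite_eq', Finset.mem_univ, if_true]
    ring
  · apply min_eq_right
    linarith
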